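/- Subordination formula: for every t ∈ ℝ with t ≠ 0 and every μ ≥ 0, one has e^{-itμ²} = π^{-1/2} e^{-i(π/4)·sign(t)} |t|^{-1/2} ∫_0^∞ e^{i s²/(4t)} cos(sμ) ds, where the integral is understood as an improper (conditionally convergent) Riemann integral lim_{R→∞} ∫_0^R. -/

import Mathlib

open Complex Filter MeasureTheory intervalIntegral

lemma aux_norm (b : ℂ) (hb : 0 ≤ b.re) (u : ℝ) : ‖Complex.exp (-b * (u:ℂ)^2)‖ ≤ 1 := by
  rw [norm_cexp_neg_mul_sq]
  apply Real.exp_le_one_iff.2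
  nlinarith [mul_nonneg hb (sq_nonneg u)]

lemma aux_tail (b : ℂ) (hb : 0 ≤ b.re) (hb0 : b ≠ 0) (R S : ℝ) (hR : 0 < R) (hRS : R ≤ S) :
    ‖∫ u in R..S, Complex.exp (-b * (u:ℂ)^2)‖ ≤ 1 / (‖b‖ * R) := by
  have hbn : 0 < ‖b‖ := norm_pos_iff.2 hb0
  have hS : 0 < S := lt_of_lt_of_le hR hRS
  have hpos : ∀ u ∈ Set.uIcc R S, 0 < u := by
    intro u hu
    rw [Set.uIcc_of_le hRS] at hu
    exact lt_of_lt_of_le hR hu.1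
  have hc1 : ContinuousOn (fun u : ℝ => Complex.exp (-b * (u:ℂ)^2)) (Set.uIcc R S) := by
    fun_prop
  have hc2 : ContinuousOn (fun u : ℝ => Complex.exp (-b * (u:ℂ)^2) / (2 * b * (u:ℂ)^2))
      (Set.uIcc R S) := by
    apply ContinuousOn.div hc1 (by fun_prop)
    intro u hu
    have : (u:ℂ) ≠ 0 := by exact_mod_cast (hpos u hu).ne'
    simp [hb0, this]
  have hd : ∀ u ∈ Set.uIcc R S, HasDerivAt
      (fun u : ℝ => Complex.exp (-b * (u:ℂ)^2) / (-2 * b * (u:ℂ)))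
      (Complex.exp (-b * (u:ℂ)^2) + Complex.exp (-b * (u:ℂ)^2) / (2 * b * (u:ℂ)^2)) u := by
    intro u hu
    have hu0 : (u:ℂ) ≠ 0 := by exact_mod_cast (hpos u hu).ne'
    have h1 : HasDerivAt (fun z : ℂ => Complex.exp (-b * z^2) / (-2 * b * z))
      (Complex.exp (-b * (u:ℂ)^2) + Complex.exp (-b * (u:ℂ)^2) / (2 * b * (u:ℂ)^2)) (u:ℂ) := by
      have h2 := (((hasDerivAt_id (u:ℂ)).pow 2).const_mul (-b)).cexp
      have h3 := (hasDerivAt_id (u:ℂ)).const_mul (-2 * b)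
      have h4 := h2.div h3 (by simp [hb0, hu0])
      refine HasDerivAt.congr_deriv h4 ?_
      simp
      field_simp
    exact h1.comp_ofReal
  have hF := integral_eq_sub_of_hasDerivAt hd (hc1.add hc2).intervalIntegrable
  rw [integral_add hc1.intervalIntegrable hc2.intervalIntegrable] at hF
  have hG : ∫ u in R..S, (1 / (2 * ‖b‖)) * (1 / u ^ 2) = (1 / (2 * ‖b‖)) * (1 / R - 1 / S) := by
    have hd2 : ∀ u ∈ Set.uIcc R S, HasDerivAt (fun u : ℝ => (1 / (2 * ‖b‖)) * (-u⁻¹))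
        ((1 / (2 * ‖b‖)) * (1 / u ^ 2)) u := by
      intro u hu
      have := ((hasDerivAt_inv (hpos u hu).ne').neg).const_mul (1 / (2 * ‖b‖))
      refine HasDerivAt.congr_deriv this ?_
      simp
    rw [integral_eq_sub_of_hasDerivAt hd2]
    · simp only [one_div]; ring
    · apply ContinuousOn.intervalIntegrable
      apply ContinuousOn.mul (by fun_prop)
      apply ContinuousOn.div (by fun_prop) (by fun_prop)
      intro u hu
      have := hpos u hu
      positivity
  have hI : ‖∫ u in R..S, Complex.exp (-b * (u:ℂ)^2) / (2 * b * (u:ℂ)^2)‖ ≤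
      (1 / (2 * ‖b‖)) * (1 / R - 1 / S) := by
    rw [← hG]
    apply norm_integral_le_of_norm_le hRS
    · refine Eventually.of_forall fun u hu => ?_
      have hu0 : 0 < u := lt_trans hR hu.1
      rw [norm_div, norm_mul, norm_mul, norm_pow, Complex.norm_real, Real.norm_of_nonneg hu0.le,
        Complex.norm_ofNat, div_mul_div_comm, one_mul]
      gcongr
      exact aux_norm b hb u
    · apply ContinuousOn.intervalIntegrable
      apply ContinuousOn.mul (by fun_prop)
      apply ContinuousOn.div (by fun_prop) (by fun_prop)
      intro u hu
      have := hpos u hu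
      positivity
  have hf : ∀ u : ℝ, 0 < u → ‖Complex.exp (-b * (u:ℂ)^2) / (-2 * b * (u:ℂ))‖ ≤
      (1 / (2 * ‖b‖)) * (1 / u) := by
    intro u hu
    rw [norm_div, norm_mul, norm_mul, Complex.norm_real, Real.norm_of_nonneg hu.le, norm_neg,
      Complex.norm_ofNat, div_mul_div_comm, one_mul]
    gcongr
    exact aux_norm b hb u
  rw [eq_sub_of_add_eq hF]
  calc _ ≤ (1 / (2 * ‖b‖)) * (1 / S) + (1 / (2 * ‖b‖)) * (1 / R)
        + (1 / (2 * ‖b‖)) * (1 / R - 1 / S) :=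
        (norm_sub_le _ _).trans (add_le_add ((norm_sub_le _ _).trans
          (add_le_add (hf S hS) (hf R hR))) hI)
    _ = _ := by field_simp; ring

lemma aux_pos (b : ℂ) (hb : 0 < b.re) (R : ℝ) (hR : 0 < R) :
    ‖((Real.pi : ℂ) / b) ^ (1 / 2 : ℂ) / 2 - ∫ u in (0:ℝ)..R, Complex.exp (-b * (u:ℂ)^2)‖
      ≤ 1 / (‖b‖ * R) := by
  have hb0 : b ≠ 0 := by rintro rfl; simp at hb
  have hi := (integrable_cexp_neg_mul_sq hb)
  have h := intervalIntegral_tendsto_integral_Ioi 0 hi.integrableOn tendsto_id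
  rw [integral_gaussian_complex_Ioi hb] at h
  refine le_of_tendsto (h.sub_const _).norm ?_
  filter_upwards [eventually_ge_atTop R] with S hS
  simp only [id]
  rw [integral_interval_sub_left hi.intervalIntegrable hi.intervalIntegrable]
  exact aux_tail b hb.le hb0 R S hR hS

lemma aux_im (a : ℝ) (ha : a ≠ 0) (R : ℝ) (hR : 0 < R) :
    ‖((Real.pi : ℂ) / (-(I * a))) ^ (1 / 2 : ℂ) / 2
      - ∫ u in (0:ℝ)..R, Complex.exp (-(-(I * a)) * (u:ℂ)^2)‖ ≤ 1 / (‖-(I * a)‖ * R) := by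
  have hac : (a:ℂ) ≠ 0 := by exact_mod_cast ha
  have hne : -(I * (a:ℂ)) ≠ 0 := by simp [ha]
  let B : ℝ → ℂ := fun e => (e:ℂ) - I * a
  have hB0 : B 0 = -(I * a) := by simp [B]
  have hBc : Continuous B := by fun_prop
  have h1 : ContinuousAt (fun e : ℝ => ‖((Real.pi : ℂ) / (B e)) ^ (1 / 2 : ℂ) / 2
      - ∫ u in (0:ℝ)..R, Complex.exp (-(B e) * (u:ℂ)^2)‖) 0 := by
    apply ContinuousAt.norm
    apply ContinuousAt.sub
    · apply ContinuousAt.div_const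
      apply ContinuousAt.cpow
      · exact continuousAt_const.div hBc.continuousAt (by rw [hB0]; exact hne)
      · exact continuousAt_const
      · rw [hB0, Complex.mem_slitPlane_iff]
        right
        rw [show (Real.pi : ℂ) / (-(I * a)) = ((Real.pi / a : ℝ) : ℂ) * I by
          push_cast; field_simp; simp]
        simp [ha, Real.pi_ne_zero]
    · apply Continuous.continuousAt
      apply continuous_parametric_intervalIntegral_of_continuous' (by fun_prop)
  have h2 : ContinuousAt (fun e : ℝ => 1 / (‖B e‖ * R)) 0 := by
    apply ContinuousAt.div continuousAt_const (by fun_prop)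
    rw [hB0]
    have := norm_pos_iff.2 hne
    positivity
  have h3 := le_of_tendsto_of_tendsto (b := nhdsWithin (0:ℝ) (Set.Ioi 0)) (h1.tendsto.mono_left nhdsWithin_le_nhds)
    (h2.tendsto.mono_left nhdsWithin_le_nhds) (by
      filter_upwards [self_mem_nhdsWithin] with e he
      apply aux_pos _ _ R hR
      simpa [B] using he)
  simpa only [hB0] using h3

lemma aux_fresnel (a : ℝ) (ha : a ≠ 0) :
    Tendsto (fun R : ℝ => ∫ u in (0:ℝ)..R, Complex.exp (I * a * (u:ℂ)^2)) atTop
      (nhds (((Real.pi : ℂ) / (-(I * a))) ^ (1 / 2 : ℂ) / 2)) := by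
  rw [tendsto_iff_norm_sub_tendsto_zero]
  have hlim : Tendsto (fun R : ℝ => 1 / (‖-(I * (a:ℂ))‖ * R)) atTop (nhds 0) := by
    apply Tendsto.const_div_atTop
    apply tendsto_id.const_mul_atTop
    apply norm_pos_iff.2
    simp [ha]
  refine squeeze_zero' (Eventually.of_forall fun _ => norm_nonneg _) ?_ hlim
  filter_upwards [eventually_gt_atTop 0] with R hR
  rw [norm_sub_rev]
  simpa only [neg_neg] using aux_im a ha R hR

lemma aux_val (t : ℝ) (ht : t ≠ 0) :
    ((Real.pi : ℂ) / (-(I * ((1 / (4 * t) : ℝ) : ℂ)))) ^ (1 / 2 : ℂ) / 2 =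
      (Real.sqrt Real.pi : ℂ) * (Real.sqrt |t| : ℂ) *
        Complex.exp (I * ((Real.pi / 4 : ℝ) : ℂ) * ((Real.sign t : ℝ) : ℂ)) := by
  have htc : (t:ℂ) ≠ 0 := by exact_mod_cast ht
  set x : ℂ := 2 * ((Real.sqrt Real.pi : ℂ) * (Real.sqrt |t| : ℂ) *
        Complex.exp (I * ((Real.pi / 4 : ℝ) : ℂ) * ((Real.sign t : ℝ) : ℂ))) with hx
  have hs : Real.sign t = 1 ∧ |t| = t ∨ Real.sign t = -1 ∧ |t| = -t := by
    rcases lt_or_gt_of_ne ht with h | h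
    · right; exact ⟨Real.sign_of_neg h, abs_of_neg h⟩
    · left; exact ⟨Real.sign_of_pos h, abs_of_pos h⟩
  have hre : 0 < x.re := by
    have e : x = ((2 * (Real.sqrt Real.pi * Real.sqrt |t|) : ℝ) : ℂ) *
        Complex.exp (((Real.pi / 4 * Real.sign t : ℝ) : ℂ) * I) := by
      rw [hx]; push_cast; ring_nf
    rw [e, Complex.re_ofReal_mul, Complex.exp_ofReal_mul_I_re]
    have h1 : 0 < Real.sqrt Real.pi := Real.sqrt_pos.2 Real.pi_pos
    have h2 : 0 < Real.sqrt |t| := Real.sqrt_pos.2 (abs_pos.2 ht)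
    have h3 : 0 < Real.cos (Real.pi / 4 * Real.sign t) := by
      apply Real.cos_pos_of_mem_Ioo
      rcases hs with h | h <;> rw [h.1] <;> constructor <;> linarith [Real.pi_pos]
    positivity
  have hsq : x ^ 2 = (Real.pi : ℂ) / (-(I * ((1 / (4 * t) : ℝ) : ℂ))) := by
    have h1 : (Real.sqrt Real.pi : ℂ)^2 = Real.pi := by
      rw [← Complex.ofReal_pow, Real.sq_sqrt Real.pi_pos.le]
    have h2 : (Real.sqrt |t| : ℂ)^2 = (|t| : ℝ) := by
      rw [← Complex.ofReal_pow, Real.sq_sqrt (abs_nonneg t)]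
    have h3 : Complex.exp (I * ((Real.pi / 4 : ℝ) : ℂ) * ((Real.sign t : ℝ) : ℂ)) ^ 2 = 
        ((Real.sign t : ℝ) : ℂ) * I := by
      rw [← Complex.exp_nat_mul]
      rcases hs with h | h <;> rw [h.1]
      · rw [show ((2:ℕ):ℂ) * (I * ((Real.pi / 4 : ℝ) : ℂ) * ((1 : ℝ) : ℂ)) = Real.pi / 2 * I by
          push_cast; ring, Complex.exp_pi_div_two_mul_I]
        simp
      · rw [show ((2:ℕ):ℂ) * (I * ((Real.pi / 4 : ℝ) : ℂ) * ((-1 : ℝ) : ℂ)) = -Real.pi / 2 * I by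
          push_cast; ring, Complex.exp_neg_pi_div_two_mul_I]
        simp
    rw [hx, mul_pow, mul_pow, mul_pow, h1, h2, h3]
    have h4 : ((|t| : ℝ) : ℂ) * ((Real.sign t : ℝ) : ℂ) = t := by
      rcases hs with h | h <;> rw [h.1, h.2] <;> simp
    have h5 : (Real.pi : ℂ) / (-(I * ((1 / (4 * t) : ℝ) : ℂ))) = 4 * Real.pi * t * I := by
      push_cast
      field_simp
      simp
    rw [h5]
    linear_combination (4 * Real.pi * I : ℂ) * h4
  rw [← hsq, one_div, Complex.sq_cpow_two_inv hre, hx]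
  ring

lemma aux_split (t : ℝ) (ht : t ≠ 0) (μ R : ℝ) :
    ∫ s in (0:ℝ)..R, Complex.exp (I * (s : ℂ) ^ 2 / (4 * (t : ℂ))) * ((Real.cos (s * μ) : ℝ) : ℂ)
      = Complex.exp (-I * (t : ℂ) * ((μ : ℂ)) ^ 2) / 2 *
        ((∫ u in (0:ℝ)..(R + 2 * t * μ), Complex.exp (I * ((1 / (4 * t) : ℝ) : ℂ) * (u:ℂ)^2)) +
         (∫ u in (0:ℝ)..(R - 2 * t * μ), Complex.exp (I * ((1 / (4 * t) : ℝ) : ℂ) * (u:ℂ)^2))) := by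
  have htc : (t:ℂ) ≠ 0 := by exact_mod_cast ht
  set g : ℝ → ℂ := fun u => Complex.exp (I * ((1 / (4 * t) : ℝ) : ℂ) * (u:ℂ)^2) with hg
  have hgc : Continuous g := by fun_prop
  have hii : ∀ x y, IntervalIntegrable g volume x y := fun x y => hgc.intervalIntegrable x y
  have hp : ∀ s : ℝ, Complex.exp (I * (s : ℂ) ^ 2 / (4 * (t : ℂ))) * ((Real.cos (s * μ) : ℝ) : ℂ)
      = Complex.exp (-I * (t : ℂ) * ((μ : ℂ)) ^ 2) / 2 * (g (s + 2 * t * μ) + g (s - 2 * t * μ)) := by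
    intro s
    have e1 : g (s + 2 * t * μ) = Complex.exp (I * (s : ℂ) ^ 2 / (4 * (t : ℂ))) *
        Complex.exp (s * μ * I) * Complex.exp (I * (t : ℂ) * ((μ : ℂ)) ^ 2) := by
      rw [← Complex.exp_add, ← Complex.exp_add]
      simp only [hg]
      congr 1
      push_cast
      field_simp
      ring
    have e2 : g (s - 2 * t * μ) = Complex.exp (I * (s : ℂ) ^ 2 / (4 * (t : ℂ))) *
        Complex.exp (-(s * μ) * I) * Complex.exp (I * (t : ℂ) * ((μ : ℂ)) ^ 2) := by
      rw [← Complex.exp_add, ← Complex.exp_add]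
      simp only [hg]
      congr 1
      push_cast
      field_simp
      ring
    have e3 : Complex.exp (-I * (t : ℂ) * ((μ : ℂ)) ^ 2) * Complex.exp (I * (t : ℂ) * ((μ : ℂ)) ^ 2) = 1 := by
      rw [← Complex.exp_add]; simp
    rw [e1, e2, Complex.ofReal_cos, Complex.cos]
    push_cast
    linear_combination (-Complex.exp (I * (s : ℂ) ^ 2 / (4 * (t : ℂ))) * (Complex.exp (s * μ * I) + Complex.exp (-(s * μ) * I)) / 2) * e3
  simp_rw [hp]
  rw [intervalIntegral.integral_const_mul, integral_add
    (Continuous.intervalIntegrable (by fun_prop) _ _) (Continuous.intervalIntegrable (by fun_prop) _ _),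
    integral_comp_add_right, integral_comp_sub_right]
  congr 1
  have hodd : ∫ u in (0:ℝ)..(0 - 2 * t * μ), g u = - ∫ u in (0:ℝ)..(0 + 2 * t * μ), g u := by
    have := integral_comp_neg (a := 0) (b := 0 + 2 * t * μ) g
    rw [show (fun u => g (-u)) = g by funext u; simp [hg]] at this
    rw [this, integral_symm]
    simp
  rw [← integral_interval_sub_left (hii 0 (R + 2 * t * μ)) (hii 0 (0 + 2 * t * μ)),
    ← integral_interval_sub_left (hii 0 (R - 2 * t * μ)) (hii 0 (0 - 2 * t * μ)), hodd]
  ring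

/-- Subordination formula: for `t ≠ 0` and `μ ≥ 0`,
`e^{-itμ²} = π^{-1/2} e^{-i(π/4)sign t} |t|^{-1/2} ∫_0^∞ e^{is²/(4t)} cos(sμ) ds`,
the integral being an improper one, `lim_{R→∞} ∫_0^R`. -/
theorem subordination_formula (t : ℝ) (ht : t ≠ 0) (μ : ℝ) (hμ : 0 ≤ μ) :
    Tendsto
      (fun R : ℝ =>
        (((Real.sqrt Real.pi)⁻¹ : ℝ) : ℂ) *
          Complex.exp (-Complex.I * ((Real.pi / 4 : ℝ) : ℂ) * ((Real.sign t : ℝ) : ℂ)) *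
          (((Real.sqrt |t|)⁻¹ : ℝ) : ℂ) *
          ∫ s in (0:ℝ)..R,
            Complex.exp (Complex.I * (s : ℂ) ^ 2 / (4 * (t : ℂ))) * ((Real.cos (s * μ) : ℝ) : ℂ))
      atTop
      (nhds (Complex.exp (-Complex.I * (t : ℂ) * ((μ : ℂ)) ^ 2))) := by
  have h := aux_fresnel (1 / (4 * t)) (by simp [ht])
  rw [aux_val t ht] at h
  have h1 := h.comp (tendsto_atTop_add_const_right atTop (2 * t * μ) tendsto_id)
  have h2 := h.comp (tendsto_atTop_add_const_right atTop (-(2 * t * μ)) tendsto_id)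
  have h3 := ((h1.add h2).const_mul (Complex.exp (-I * (t : ℂ) * ((μ : ℂ)) ^ 2) / 2)).const_mul
    ((((Real.sqrt Real.pi)⁻¹ : ℝ) : ℂ) *
          Complex.exp (-Complex.I * ((Real.pi / 4 : ℝ) : ℂ) * ((Real.sign t : ℝ) : ℂ)) *
          (((Real.sqrt |t|)⁻¹ : ℝ) : ℂ))
  convert h3 using 2
  · rw [aux_split t ht]
    simp [sub_eq_add_neg]
  · have e1 : (Real.sqrt Real.pi : ℂ) ≠ 0 := by
      exact_mod_cast (Real.sqrt_pos.2 Real.pi_pos).ne'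
    have e2 : (Real.sqrt |t| : ℂ) ≠ 0 := by
      exact_mod_cast (Real.sqrt_pos.2 (abs_pos.2 ht)).ne'
    have e3 : Complex.exp (-Complex.I * ((Real.pi / 4 : ℝ) : ℂ) * ((Real.sign t : ℝ) : ℂ)) *
      Complex.exp (Complex.I * ((Real.pi / 4 : ℝ) : ℂ) * ((Real.sign t : ℝ) : ℂ)) = 1 := by
      rw [← Complex.exp_add]; simp
    rw [Complex.ofReal_inv, Complex.ofReal_inv]
    generalize Complex.exp (-Complex.I * ((Real.pi / 4 : ℝ) : ℂ) * ((Real.sign t : ℝ) : ℂ)) = A at *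
    generalize Complex.exp (Complex.I * ((Real.pi / 4 : ℝ) : ℂ) * ((Real.sign t : ℝ) : ℂ)) = B at *
    field_simp
    linear_combination (-2 : ℂ) * e3
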